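/- arXiv:2605.08388 — 2 statements merged into one kernel-verified Lean document; each statement's English description precedes it below -/
import Mathlib

section
/- (Lemma 2, ideal case.) Let K ≥ 1 and let φ : Fin K → Fin K → ℝ be a column-stochastic matrix (all entries nonnegative, each column summing to 1). Define a = min_{l ∈ Fin K} φ l l. Let y, h ∈ Fin K with h ≠ y and suppose φ y y < 1. Then φ y y / (1 − φ y y) ≥ (φ h y + 2a − 1) / (2 − (φ h y + 2a)), and moreover the denominator 2 − (φ h y + 2a) is strictly positive. -/
section Odds

variable {𝕜 : Type*} [Field 𝕜] [LinearOrder 𝕜] [IsStrictOrderedRing 𝕜]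

theorem strictMonoOn_div_one_sub : StrictMonoOn (fun x : 𝕜 => x / (1 - x)) (Set.Iio 1) := by
  intro x hx y hy hxy
  rw [Set.mem_Iio, ← sub_pos] at hx hy
  refine (div_lt_div_iff₀ hx hy).mpr ?_
  linarith

theorem ideal_human_odds_lower_bound_general {ι : Type*} {s : Finset ι} {p : ι → 𝕜}
    (hnn : ∀ i ∈ s, 0 ≤ p i) (hsum : ∑ i ∈ s, p i ≤ 1) {y h : ι} (hy : y ∈ s) (hh : h ∈ s)
    (hhy : h ≠ y) (hlt : p y < 1) {a : 𝕜} (ha : a ≤ p y) :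
    (p h + 2 * a - 1) / (2 - (p h + 2 * a)) ≤ p y / (1 - p y) ∧ 0 < 2 - (p h + 2 * a) := by
  have pair_le_one : p h + p y ≤ 1 := (Finset.add_le_sum hnn hh hy hhy).trans hsum
  have le_correct : p h + 2 * a - 1 ≤ p y := by linarith
  have lt_one : p h + 2 * a - 1 < 1 := le_correct.trans_lt hlt
  have one_sub_eq : 1 - (p h + 2 * a - 1) = 2 - (p h + 2 * a) := by ring
  rw [← one_sub_eq]
  exact ⟨strictMonoOn_div_one_sub.monotoneOn lt_one hlt le_correct, sub_pos.mpr lt_one⟩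

end Odds

/-- Lemma 2 (ideal case): for a column-stochastic confusion matrix `φ` with
minimum diagonal entry `a`, estimated label `h ≠ y`, and `φ y y < 1`,
the odds ratio satisfies
`φ y y / (1 - φ y y) ≥ (φ h y + 2a - 1) / (2 - (φ h y + 2a))`,
and the denominator `2 - (φ h y + 2a)` is strictly positive. -/
theorem ideal_human_odds_lower_bound
    (K : ℕ) (hK : 1 ≤ K) (φ : Fin K → Fin K → ℝ)
    (hnn : ∀ s t : Fin K, 0 ≤ φ s t)
    (hcol : ∀ t : Fin K, ∑ s : Fin K, φ s t = 1)
    (y h : Fin K) (hhy : h ≠ y) (hlt : φ y y < 1) :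
    (φ h y + 2 * (Finset.univ.inf' (Finset.univ_nonempty_iff.mpr ⟨⟨0, hK⟩⟩)
          (fun l : Fin K => φ l l)) - 1) /
      (2 - (φ h y + 2 * (Finset.univ.inf' (Finset.univ_nonempty_iff.mpr ⟨⟨0, hK⟩⟩)
          (fun l : Fin K => φ l l)))) ≤ φ y y / (1 - φ y y) ∧
    0 < 2 - (φ h y + 2 * (Finset.univ.inf' (Finset.univ_nonempty_iff.mpr ⟨⟨0, hK⟩⟩)
          (fun l : Fin K => φ l l))) :=
  ideal_human_odds_lower_bound_general (p := (φ · y)) (fun s _ => hnn s y) (hcol y).le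
    (Finset.mem_univ y) (Finset.mem_univ h) hhy hlt (Finset.inf'_le _ (Finset.mem_univ y))
end

section
/- (Product corollary of Lemma 2, ideal case.) Let K ≥ 1, let n ≥ 1, and for each i ∈ Fin n let φ⁽ⁱ⁾ : Fin K → Fin K → ℝ be a column-stochastic matrix (entries nonnegative, columns summing to 1) with aᵢ = min_{l} φ⁽ⁱ⁾ l l. Fix y ∈ Fin K and for each i let hᵢ ∈ Fin K with hᵢ ≠ y. Suppose for every i that φ⁽ⁱ⁾ y y < 1 and φ⁽ⁱ⁾ hᵢ y + 2aᵢ ≥ 1. Then ∏_{i} φ⁽ⁱ⁾ y y / (1 − φ⁽ⁱ⁾ y y) ≥ ∏_{i} (φ⁽ⁱ⁾ hᵢ y + 2aᵢ − 1) / (2 − (φ⁽ⁱ⁾ hᵢ y + 2aᵢ)). -/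
/-!
The map `odds x = x / (1 - x)` is increasing for `x < 1`, and the PLACO expression
`(v - 1) / (2 - v)` is `odds (v - 1)`. For one human, `v = φ h y + 2a`; since `h ≠ y` are distinct
labels in the same column, `φ h y ≤ 1 - φ y y`, which together with `a ≤ φ y y` gives
`v - 1 ≤ φ y y`. Hence the inequality holds for each human separately, and `1 ≤ v` makes the
factors nonnegative, so that the inequalities may be multiplied.
-/

section Odds

variable {𝕜 : Type*} [Field 𝕜]

/-- The odds `x / (1 - x)` of an event of probability `x`, used to compare accuracies of humans.
It is defined on any field; at `x = 1`, where the odds are infinite, division by zero gives `0`. -/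
def odds (x : 𝕜) : 𝕜 := x / (1 - x)

lemma odds_sub_one (v : 𝕜) : odds (v - 1) = (v - 1) / (2 - v) := by
  rw [odds, show 1 - (v - 1) = 2 - v by ring]

variable [LinearOrder 𝕜] [IsStrictOrderedRing 𝕜]

lemma odds_nonneg {x : 𝕜} (h₀ : 0 ≤ x) (h₁ : x ≤ 1) : 0 ≤ odds x :=
  div_nonneg h₀ (sub_nonneg.mpr h₁)

lemma monotoneOn_odds : MonotoneOn (odds : 𝕜 → 𝕜) (Set.Iio 1) := by
  intro x hx y hy hxy
  rw [odds, odds, div_le_div_iff₀ (sub_pos.mpr hx) (sub_pos.mpr hy)]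
  linarith

end Odds

lemma add_two_mul_sub_one_le_of_sum_le_one {κ R : Type*} [Fintype κ]
    [CommRing R] [LinearOrder R] [IsStrictOrderedRing R]
    {p : κ → R} (hp : ∀ s, 0 ≤ p s) (hsum : ∑ s, p s ≤ 1)
    {j y : κ} (hjy : j ≠ y) {a : R} (ha : a ≤ p y) :
    p j + 2 * a - 1 ≤ p y := by
  have hadd : p j + p y ≤ 1 :=
    (Finset.add_le_sum (fun s _ => hp s) (Finset.mem_univ j) (Finset.mem_univ y) hjy).trans hsum
  linarith

/-- Here `p i` stands for the column of the `i`-th confusion matrix at the true label `y i`. -/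
theorem ideal_humans_product_odds_lower_bound_general
    {ι κ 𝕜 : Type*} [Fintype κ] [Field 𝕜] [LinearOrder 𝕜] [IsStrictOrderedRing 𝕜]
    (S : Finset ι) (p : ι → κ → 𝕜) (a : ι → 𝕜) (y h : ι → κ)
    (hnn : ∀ i ∈ S, ∀ s, 0 ≤ p i s) (hsum : ∀ i ∈ S, ∑ s, p i s ≤ 1)
    (hhy : ∀ i ∈ S, h i ≠ y i) (hlt : ∀ i ∈ S, p i (y i) < 1)
    (ha : ∀ i ∈ S, a i ≤ p i (y i)) (hge : ∀ i ∈ S, 1 ≤ p i (h i) + 2 * a i) :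
    ∏ i ∈ S, (p i (h i) + 2 * a i - 1) / (2 - (p i (h i) + 2 * a i)) ≤
      ∏ i ∈ S, p i (y i) / (1 - p i (y i)) := by
  simp only [← odds_sub_one]
  change _ ≤ ∏ i ∈ S, odds (p i (y i))
  have hle : ∀ i ∈ S, p i (h i) + 2 * a i - 1 ≤ p i (y i) := fun i hi =>
    add_two_mul_sub_one_le_of_sum_le_one (hnn i hi) (hsum i hi) (hhy i hi) (ha i hi)
  have hlt_one : ∀ i ∈ S, p i (h i) + 2 * a i - 1 < 1 := fun i hi =>
    (hle i hi).trans_lt (hlt i hi)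
  exact Finset.prod_le_prod
    (fun i hi => odds_nonneg (sub_nonneg.mpr (hge i hi)) (hlt_one i hi).le)
    (fun i hi => monotoneOn_odds (hlt_one i hi) (hlt i hi) (hle i hi))

/-- Product corollary of Lemma 2 (ideal case): for `n` ideal humans with
column-stochastic confusion matrices `φ i`, minimum diagonal entries `aᵢ`,
estimated labels `h i ≠ y`, with `φ i y y < 1` and `φ i (h i) y + 2aᵢ ≥ 1`
for every `i`, the product of odds ratios is bounded below by the product of
the PLACO value-function expressions. -/
theorem ideal_humans_product_odds_lower_bound
    (K n : ℕ) (hK : 1 ≤ K) (hn : 1 ≤ n)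
    (φ : Fin n → Fin K → Fin K → ℝ)
    (hnn : ∀ i, ∀ s t : Fin K, 0 ≤ φ i s t)
    (hcol : ∀ i, ∀ t : Fin K, ∑ s : Fin K, φ i s t = 1)
    (y : Fin K) (h : Fin n → Fin K) (hhy : ∀ i, h i ≠ y)
    (hlt : ∀ i, φ i y y < 1)
    (hge : ∀ i, 1 ≤ φ i (h i) y +
        2 * (Finset.univ.inf' (Finset.univ_nonempty_iff.mpr ⟨⟨0, hK⟩⟩)
              (fun l : Fin K => φ i l l))) :
    ∏ i : Fin n,
        (φ i (h i) y +
            2 * (Finset.univ.inf' (Finset.univ_nonempty_iff.mpr ⟨⟨0, hK⟩⟩)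
                  (fun l : Fin K => φ i l l)) - 1) /
          (2 - (φ i (h i) y +
            2 * (Finset.univ.inf' (Finset.univ_nonempty_iff.mpr ⟨⟨0, hK⟩⟩)
                  (fun l : Fin K => φ i l l)))) ≤
      ∏ i : Fin n, φ i y y / (1 - φ i y y) := by
  exact ideal_humans_product_odds_lower_bound_general
    Finset.univ (fun i s => φ i s y) _ (fun _ => y) h
    (fun i _ s => hnn i s y) (fun i _ => (hcol i y).le) (fun i _ => hhy i) (fun i _ => hlt i)
    (fun i _ => Finset.inf'_le (fun l => φ i l l) (Finset.mem_univ y)) (fun i _ => hge i)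
end
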